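/- Let K be a field complete with respect to a nontrivial nonarchimedean absolute value, with ring of integers O_K, and let π ∈ O_K be a nonzero nonunit. Let R → S be a homomorphism of O_K-algebras such that π is a nonzerodivisor on both R and S, and suppose R is π-adically complete (R → lim_n R/π^n R is bijective). If R/πR → S/πS is faithfully flat and S/πS is a finitely presented R/πR-algebra, then R → S is a universal descent morphism. -/

import Mathlib

open CategoryTheory CategoryTheory.Pretriangulated

universe u

instance restrictScalarsAdditive {R S : Type u} [CommRing R] [CommRing S] (f : R →+* S) :
    (ModuleCat.restrictScalars.{u} f).Additive where
  map_add := rfl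

/-- `f : R →+* S` is a universal descent morphism if the smallest strictly full triangulated
subcategory of `D(R)` closed under direct summands and containing all restrictions of scalars
of objects of `D(S)` is all of `D(R)`. -/
def IsUniversalDescent {R S : Type u} [CommRing R] [CommRing S] (f : R →+* S) : Prop :=
  letI := HasDerivedCategory.standard (ModuleCat.{u} R)
  ∀ P : DerivedCategory (ModuleCat.{u} R) → Prop,
    (∀ X Y : DerivedCategory (ModuleCat.{u} R), (X ≅ Y) → P X → P Y) →
    (∀ X, P X → P (X⟦(1 : ℤ)⟧)) →
    (∀ X, P X → P (X⟦(-1 : ℤ)⟧)) →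
    (∀ T : Triangle (DerivedCategory (ModuleCat.{u} R)),
      (T ∈ distTriang (DerivedCategory (ModuleCat.{u} R))) →
      P T.obj₁ → P T.obj₂ → P T.obj₃) →
    (∀ (X Y : DerivedCategory (ModuleCat.{u} R)) (i : X ⟶ Y) (r : Y ⟶ X),
      i ≫ r = 𝟙 X → P Y → P X) →
    (∀ K : CochainComplex (ModuleCat.{u} S) ℤ,
      P (DerivedCategory.Q.obj
        (((ModuleCat.restrictScalars.{u} f).mapHomologicalComplex (ComplexShape.up ℤ)).obj K))) →
    ∀ X, P X


open IsUltrametricDist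

/-- The ring of integers `O_K = {x : K | ‖x‖ ≤ 1}` of a nonarchimedean normed field. -/
def ringOfIntegers (K : Type u) [NontriviallyNormedField K] [IsUltrametricDist K] :
    Subring K where
  carrier := {x : K | ‖x‖ ≤ 1}
  one_mem' := by simp
  mul_mem' {a b} ha hb := by
    simpa [norm_mul] using mul_le_one₀ ha (norm_nonneg b) hb
  add_mem' {a b} ha hb := le_trans (norm_add_le_max a b) (max_le ha hb)
  zero_mem' := by simp
  neg_mem' {a} ha := by simpa using ha

variable {K : Type u} [NontriviallyNormedField K] [IsUltrametricDist K] [CompleteSpace K]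
  (π : ringOfIntegers K) {R S : Type u} [CommRing R] [CommRing S]
  [Algebra (ringOfIntegers K) R] [Algebra (ringOfIntegers K) S]

/-- The induced map `R/πR → S/πS` for an `O_K`-algebra map `f : R → S`. -/
def modPiMap (f : R →ₐ[ringOfIntegers K] S) :
    R ⧸ Ideal.span {algebraMap (ringOfIntegers K) R π} →+*
      S ⧸ Ideal.span {algebraMap (ringOfIntegers K) S π} :=
  Ideal.quotientMap _ f.toRingHom
    (by
      rw [Ideal.span_le, Set.singleton_subset_iff, SetLike.mem_coe, Ideal.mem_comap]
      rw [show f.toRingHom (algebraMap (ringOfIntegers K) R π)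
            = algebraMap (ringOfIntegers K) S π from f.commutes π]
      exact Ideal.subset_span (Set.mem_singleton _))

/-
Let `B` be the cokernel of `A → S` and put `Q = B ⊗ B`. The exact sequence
`0 → A → S → S ⊗ B → Q → 0` represents a class in `Ext²(Q, A)`. When it vanishes, `S` embeds
compatibly with `A` in a module `M` with `0 → A → M → S ⊗ B → 0` exact; after tensoring with a
termwise flat complex `X`, the composite `S ⊗ X → M ⊗ X → S ⊗ B ⊗ X` is a map between complexes of
`S`-modules whose cone has `X[1]` as a retract. Modulo `a`, the module `Q` is flat and countably
presented, hence of projective dimension at most one, so the class vanishes, and `a`-adic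
completeness of `A` lifts this vanishing. Replacing `S` by its maximal `a`-adically separated
quotient changes nothing modulo `a`.
-/

section TermwiseProjectiveResolution

open Limits MorphismProperty ZeroObject

lemma hasSmallObjectArgument_ofHoms_of_mono {C : Type*} [Category.{u} C] [Abelian C]
    [IsGrothendieckAbelian.{u} C] {ι : Type} {A B : ι → C} (f : ∀ i, A i ⟶ B i)
    [∀ i, Mono (f i)] : HasSmallObjectArgument.{u} (ofHoms f) := by
  obtain ⟨κ, hκ', hκ⟩ := HasCardinalLT.exists_regular_cardinal.{u} (Σ i, Subobject (A i))
  have : Fact κ.IsRegular := ⟨hκ'⟩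
  have : Nonempty κ.ord.ToType := by simpa using hκ'.ne_zero
  have := WellFoundedLT.toOrderBot κ.ord.ToType
  have pushouts_le : (coproducts.{u} (ofHoms f)).pushouts ≤ monomorphisms C := by
    simp only [pushouts_le_iff, coproducts_le_iff]
    rintro _ _ _ ⟨i⟩
    exact monomorphisms.infer_property (f i)
  refine ⟨κ, inferInstance, inferInstance,
    { isSmall := isSmall_ofHoms.{u} f
      preservesColimit := ?_ }⟩
  rintro _ _ X Y _ ⟨i⟩ g hg
  let hg' : (monomorphisms C).TransfiniteCompositionOfShape κ.ord.ToType g :=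
    { toTransfiniteCompositionOfShape := hg.toTransfiniteCompositionOfShape
      map_mem j hj := pushouts_le _ (by
        simpa only [ofHoms_homFamily] using (hg.attachCells j hj).pushouts_coproducts) }
  have (j j' : κ.ord.ToType) (φ : j ⟶ j') : Mono (hg.F.map φ) := hg'.mem_map φ
  exact IsGrothendieckAbelian.preservesColimit_coyoneda_obj_of_mono (Y := hg.F) (κ := κ)
    (hκ.of_injective (fun x ↦ (⟨i, x⟩ : Σ i, Subobject (A i))) fun _ _ h ↦ by simpa using h)

variable (A : Type u) [CommRing A]

lemma int_up_rel_succ (n : ℤ) : (ComplexShape.up ℤ).Rel n (n + 1) := rfl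

/-- The inclusion of the sphere complex `A[-(n + 1)]` into the disk complex `A ⟶ A` in degrees
`n` and `n + 1`. These maps are the generating cofibrations of complexes of `A`-modules. -/
noncomputable def sphereToDisk (n : ℤ) :
    (HomologicalComplex.single (ModuleCat.{u} A) (ComplexShape.up ℤ) (n + 1)).obj (.of A A) ⟶
      HomologicalComplex.double (𝟙 (ModuleCat.of A A)) (int_up_rel_succ n) :=
  HomologicalComplex.mkHomFromSingle (HomologicalComplex.doubleXIso₁ _ _ (by omega)).inv
    (fun k _ ↦ by rw [HomologicalComplex.double_d_eq_zero₀ _ _ _ _ (by omega), comp_zero])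

instance (n : ℤ) : Mono (sphereToDisk A n) := by
  have (k : ℤ) : Mono ((sphereToDisk A n).f k) := by
    by_cases hk : k = n + 1
    · subst hk
      simp only [sphereToDisk, HomologicalComplex.mkHomFromSingle_f]
      infer_instance
    · exact ⟨fun _ _ _ ↦ (HomologicalComplex.isZero_single_obj_X _ _ _ _ hk).eq_of_tgt _ _⟩
  exact HomologicalComplex.mono_of_mono_f _ this

instance : HasSmallObjectArgument.{u} (ofHoms (sphereToDisk A)) :=
  hasSmallObjectArgument_ofHoms_of_mono _

variable {A} {K L : CochainComplex (ModuleCat.{u} A) ℤ} {p : K ⟶ L}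

lemma exists_comp_eq_of_rlp_sphereToDisk (hp : (ofHoms (sphereToDisk A)).rlp p) (n : ℤ)
    (ζ : ModuleCat.of A A ⟶ K.X (n + 1)) (η : ModuleCat.of A A ⟶ L.X n)
    (hζ : ∀ k, (ComplexShape.up ℤ).Rel (n + 1) k → ζ ≫ K.d (n + 1) k = 0)
    (h : η ≫ L.d n (n + 1) = ζ ≫ p.f (n + 1)) :
    ∃ ξ : ModuleCat.of A A ⟶ K.X n, ξ ≫ K.d n (n + 1) = ζ ∧ ξ ≫ p.f n = η := by
  have hn : n ≠ n + 1 := by omega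
  have sq : CommSq (HomologicalComplex.mkHomFromSingle ζ hζ) (sphereToDisk A n) p
      (HomologicalComplex.mkHomFromDouble _ hn η (η ≫ L.d n (n + 1)) (by simp) (by simp)) := by
    constructor
    apply HomologicalComplex.from_single_hom_ext
    simp [sphereToDisk, h]
  obtain ⟨⟨l, hl₁, hl₂⟩⟩ := ((hp _ ⟨n⟩).sq_hasLift sq).exists_lift
  refine ⟨(HomologicalComplex.doubleXIso₀ _ _).inv ≫ l.f n, ?_, ?_⟩
  · have := congr((HomologicalComplex.singleObjXSelf _ _ _).inv ≫
      HomologicalComplex.Hom.f $hl₁ (n + 1))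
    simpa [sphereToDisk, HomologicalComplex.double_d _ _ hn] using this
  · have := congr(HomologicalComplex.Hom.f $hl₂ n)
    rw [HomologicalComplex.comp_f] at this
    simp [this]

lemma rlp_sphereToDisk_of_exists_comp_eq
    (hp : ∀ (n : ℤ) (ζ : ModuleCat.of A A ⟶ K.X (n + 1)) (η : ModuleCat.of A A ⟶ L.X n),
      ζ ≫ K.d (n + 1) (n + 1 + 1) = 0 → η ≫ L.d n (n + 1) = ζ ≫ p.f (n + 1) →
      ∃ ξ : ModuleCat.of A A ⟶ K.X n, ξ ≫ K.d n (n + 1) = ζ ∧ ξ ≫ p.f n = η) :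
    (ofHoms (sphereToDisk A)).rlp p := by
  rintro _ _ _ ⟨n⟩
  refine ⟨fun {top bot} sq ↦ ?_⟩
  have hn : n ≠ n + 1 := by omega
  have hw := congr((HomologicalComplex.singleObjXSelf _ _ _).inv ≫
    HomologicalComplex.Hom.f $(sq.w) (n + 1))
  simp only [sphereToDisk, HomologicalComplex.comp_f, HomologicalComplex.mkHomFromSingle_f,
    Category.assoc, Iso.inv_hom_id_assoc] at hw
  obtain ⟨ξ, hξ₁, hξ₂⟩ := hp n ((HomologicalComplex.singleObjXSelf _ _ _).inv ≫ top.f (n + 1))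
    ((HomologicalComplex.doubleXIso₀ _ _).inv ≫ bot.f n) (by simp)
    (by simp [hw, HomologicalComplex.double_d _ _ hn])
  refine ⟨⟨HomologicalComplex.mkHomFromDouble _ hn ξ (ξ ≫ K.d n (n + 1)) (by simp) (by simp),
    ?_, ?_⟩⟩
  · apply HomologicalComplex.from_single_hom_ext
    simp [sphereToDisk, hξ₁]
  · apply HomologicalComplex.from_double_hom_ext
    · simp [hξ₂]
    · simp [hξ₁, hw]

lemma rlp_sphereToDisk_iff : (ofHoms (sphereToDisk A)).rlp p ↔
    ∀ (n : ℤ) (z : K.X (n + 1)) (y : L.X n), K.d (n + 1) (n + 1 + 1) z = 0 →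
      L.d n (n + 1) y = p.f (n + 1) z → ∃ x : K.X n, K.d n (n + 1) x = z ∧ p.f n x = y := by
  refine ⟨fun hp n z y hz h ↦ ?_, fun hp ↦ rlp_sphereToDisk_of_exists_comp_eq fun n ζ η hζ h ↦ ?_⟩
  · obtain ⟨ξ, hξ₁, hξ₂⟩ := exists_comp_eq_of_rlp_sphereToDisk hp n
      (ModuleCat.ofHom (.toSpanSingleton A _ z)) (ModuleCat.ofHom (.toSpanSingleton A _ y))
      (by rintro _ rfl; ext; simpa using hz) (by ext; simpa using h)
    exact ⟨ξ (1 : A), by simpa using ConcreteCategory.congr_hom hξ₁ (1 : A),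
      by simpa using ConcreteCategory.congr_hom hξ₂ (1 : A)⟩
  · obtain ⟨x, hx₁, hx₂⟩ := hp n (ζ (1 : A)) (η (1 : A)) (ConcreteCategory.congr_hom hζ (1 : A))
      (ConcreteCategory.congr_hom h (1 : A))
    refine ⟨ModuleCat.ofHom (.toSpanSingleton A _ x), ?_, ?_⟩
    · ext; simpa using hx₁
    · ext; simpa using hx₂

instance epi_linearCombination_id (T : ModuleCat.{u} A) :
    Epi (ModuleCat.ofHom (Finsupp.linearCombination A (id : T → T))) :=
  (ModuleCat.epi_iff_surjective _).2 (Finsupp.linearCombination_id_surjective A T)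

lemma quasiIso_of_rlp_sphereToDisk (hp : (ofHoms (sphereToDisk A)).rlp p) : QuasiIso p := by
  rw [rlp_sphereToDisk_iff] at hp
  rw [quasiIso_iff]
  intro j
  obtain ⟨i, rfl⟩ : ∃ i, j = i + 1 := ⟨j - 1, by omega⟩
  rw [quasiIsoAt_iff_isIso_homologyMap]
  have : Mono (HomologicalComplex.homologyMap p (i + 1)) := by
    rw [HomologicalComplex.mono_homologyMap_iff_up_to_refinements _ i (i + 1) (i + 1 + 1)
      (by simp) (by simp)]
    intro T z hz y hy
    choose x hx using fun t ↦ hp i (z t) (y t) (ConcreteCategory.congr_hom hz t)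
      (ConcreteCategory.congr_hom hy t).symm
    refine ⟨.of A (T →₀ A), _, epi_linearCombination_id T,
      ModuleCat.ofHom (Finsupp.linearCombination A x), ?_⟩
    ext t
    simp [hx]
  have : Epi (HomologicalComplex.homologyMap p (i + 1)) := by
    rw [HomologicalComplex.epi_homologyMap_iff_up_to_refinements _ i (i + 1) (i + 1 + 1)
      (by simp) (by simp)]
    intro T y hy
    choose x hx using fun t ↦ hp (i + 1) 0 (y t) (map_zero _)
      (by simpa using ConcreteCategory.congr_hom hy t)
    refine ⟨.of A (T →₀ A), _, epi_linearCombination_id T,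
      ModuleCat.ofHom (Finsupp.linearCombination A x), ?_, 0, ?_⟩
    · ext t
      simp [hx]
    · ext t
      simp [hx]
  exact isIso_of_mono_of_epi _

variable {M N : ℤ → ModuleCat.{u} A}

/-- The product over all `n` of the contractible disks `M n ⟶ M n` in degrees `n - 1` and `n`.
Morphisms to it are arbitrary families of maps to the `M n`. -/
noncomputable def cofreeComplex (M : ℤ → ModuleCat.{u} A) : CochainComplex (ModuleCat.{u} A) ℤ :=
  CochainComplex.of (fun n ↦ .of A (M n × M (n + 1)))
    (fun n ↦ ModuleCat.ofHom (.inl A (M (n + 1)) (M (n + 1 + 1)) ∘ₗ .snd A (M n) (M (n + 1))))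
    (fun n ↦ by ext <;> rfl)

lemma cofreeComplex_d_apply (n : ℤ) (x : M n × M (n + 1)) :
    (cofreeComplex M).d n (n + 1) x = (x.2, (0 : M (n + 1 + 1))) :=
  ConcreteCategory.congr_hom
    (CochainComplex.of_d (fun n ↦ ModuleCat.of A (M n × M (n + 1))) _ n) x

/-- The map of cofree complexes induced by a family of maps. -/
noncomputable def cofreeComplexMap (f : ∀ n, M n ⟶ N n) : cofreeComplex M ⟶ cofreeComplex N where
  f n := ModuleCat.ofHom ((f n).hom.prodMap (f (n + 1)).hom)
  comm' := by
    rintro n _ rfl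
    ext x
    exact (cofreeComplex_d_apply n _).trans <| Prod.ext
      congr(f (n + 1) (Prod.fst $(cofreeComplex_d_apply n x))).symm
      (congr(f (n + 1 + 1) (Prod.snd $(cofreeComplex_d_apply n x))).trans (map_zero _)).symm

/-- The morphism to a cofree complex determined by its components. -/
noncomputable def toCofreeComplex (φ : ∀ n, L.X n ⟶ M n) : L ⟶ cofreeComplex M where
  f n := ModuleCat.ofHom ((φ n).hom.prod (L.d n (n + 1) ≫ φ (n + 1)).hom)
  comm' := by
    rintro n _ rfl
    ext x
    have hx : L.d (n + 1) (n + 1 + 1) (L.d n (n + 1) x) = 0 := congr($(L.d_comp_d _ _ _) x)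
    exact (cofreeComplex_d_apply n _).trans <| Prod.ext rfl <|
      (congr(φ (n + 1 + 1) $hx).trans (map_zero _)).symm

lemma rlp_sphereToDisk_cofreeComplexMap (f : ∀ n, M n ⟶ N n)
    (hf : ∀ n, Function.Surjective (f n)) :
    (ofHoms (sphereToDisk A)).rlp (cofreeComplexMap f) := by
  rw [rlp_sphereToDisk_iff]
  rintro n ⟨z, z'⟩ ⟨y, y'⟩ hz h
  obtain rfl : z' = 0 := congr(Prod.fst $((cofreeComplex_d_apply (n + 1) (z, z')).symm.trans hz))
  obtain rfl : y' = f (n + 1) z := congr(Prod.fst $((cofreeComplex_d_apply n (y, y')).symm.trans h))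
  obtain ⟨x, rfl⟩ := hf n y
  exact ⟨(x, z), cofreeComplex_d_apply n (x, z), rfl⟩

lemma projective_X_of_llp_rlp_sphereToDisk
    (hK : IsZero K) (hp : (ofHoms (sphereToDisk A)).rlp.llp p) (n : ℤ) :
    Projective (L.X n) := by
  let π (n : ℤ) : Projective.over (L.X n) ⟶ L.X n := Projective.π (L.X n)
  have hπ := rlp_sphereToDisk_cofreeComplexMap π
    fun n ↦ (ModuleCat.epi_iff_surjective _).1 inferInstance
  have sq : CommSq 0 p (cofreeComplexMap π) (toCofreeComplex fun n ↦ 𝟙 (L.X n)) :=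
    ⟨hK.eq_of_src _ _⟩
  obtain ⟨⟨l, -, hl⟩⟩ := ((hp _ hπ).sq_hasLift sq).exists_lift
  let σ : L.X n ⟶ Projective.over (L.X n) := ModuleCat.ofHom (.fst A _ _ ∘ₗ (l.f n).hom)
  have hσ : σ ≫ π n = 𝟙 (L.X n) := by
    ext x
    exact congr(Prod.fst ((HomologicalComplex.Hom.f $hl n) x))
  exact (Retract.mk σ (π n) hσ).projective

lemma exists_quasiIso_projective (K : CochainComplex (ModuleCat.{u} A) ℤ) :
    ∃ (L : CochainComplex (ModuleCat.{u} A) ℤ) (p : L ⟶ K), QuasiIso p ∧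
      ∀ n, Projective (L.X n) := by
  let fac := factorizationData (ofHoms (sphereToDisk A)).rlp.llp (ofHoms (sphereToDisk A)).rlp
    (0 : 0 ⟶ K)
  exact ⟨fac.Z, fac.p, quasiIso_of_rlp_sphereToDisk fac.hp,
    projective_X_of_llp_rlp_sphereToDisk (isZero_zero _) fac.hi⟩

end TermwiseProjectiveResolution

section Descent

open Limits MonoidalCategory TensorProduct

lemma exists_retract_of_distTriang {C : Type*} [Category* C] [HasZeroObject C] [HasShift C ℤ]
    [Preadditive C] [∀ n : ℤ, (shiftFunctor C n).Additive] [Pretriangulated C]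
    {X Z M T Y : C} {ι : X ⟶ Z} {s : Z ⟶ M} {b : M ⟶ T} {δ : T ⟶ X⟦(1 : ℤ)⟧}
    {c : T ⟶ Y} {ω : Y ⟶ Z⟦(1 : ℤ)⟧} (hM : Triangle.mk (ι ≫ s) b δ ∈ distTriang C)
    (hY : Triangle.mk (s ≫ b) c ω ∈ distTriang C) : Nonempty (Retract (X⟦(1 : ℤ)⟧) Y) := by
  obtain ⟨ρ, hcρ, hρ⟩ : ∃ ρ : Y ⟶ X⟦(1 : ℤ)⟧, c ≫ ρ = 𝟙 T ≫ δ ∧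
      ω ≫ s⟦(1 : ℤ)⟧' = ρ ≫ (-(ι ≫ s)⟦(1 : ℤ)⟧') :=
    complete_distinguished_triangle_morphism _ _ hY (rot_of_distTriang _ hM) s (𝟙 T)
      (Category.comp_id _)
  have hι : (-ι⟦(1 : ℤ)⟧') ≫ (s ≫ b)⟦(1 : ℤ)⟧' = 0 := by
    have : (ι ≫ s) ≫ b = 0 := comp_distTriang_mor_zero₁₂ _ hM
    rw [Preadditive.neg_comp, ← Functor.map_comp, ← Category.assoc, this, Functor.map_zero,
      neg_zero]
  obtain ⟨σ, hσ⟩ : ∃ σ : X⟦(1 : ℤ)⟧ ⟶ Y, -ι⟦(1 : ℤ)⟧' = σ ≫ ω :=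
    Triangle.coyoneda_exact₁ _ hY _ hι
  have hσρ : (σ ≫ ρ - 𝟙 _) ≫ (ι ≫ s)⟦(1 : ℤ)⟧' = 0 := by
    have : ρ ≫ (ι ≫ s)⟦(1 : ℤ)⟧' = -ω ≫ s⟦(1 : ℤ)⟧' := by rw [hρ, Preadditive.comp_neg, neg_neg]
    rw [Preadditive.sub_comp, Category.assoc, this, Preadditive.comp_neg, ← Category.assoc, ← hσ,
      Preadditive.neg_comp, neg_neg, ← Functor.map_comp, Category.id_comp, sub_self]
  obtain ⟨τ, hτ⟩ : ∃ τ : X⟦(1 : ℤ)⟧ ⟶ T, σ ≫ ρ - 𝟙 _ = τ ≫ δ :=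
    Triangle.coyoneda_exact₁ _ hM _ hσρ
  refine ⟨⟨σ - τ ≫ c, ρ, ?_⟩⟩
  rw [Preadditive.sub_comp, Category.assoc, hcρ, Category.id_comp, ← hτ, sub_sub_cancel]

variable {A B : Type u} [CommRing A]

/-- The complex `W ⊗ K`. -/
noncomputable abbrev tensorComplex (W : ModuleCat.{u} A) (K : CochainComplex (ModuleCat.{u} A) ℤ) :
    CochainComplex (ModuleCat.{u} A) ℤ :=
  (((curriedTensor _).obj W).mapHomologicalComplex _).obj K

/-- The map `W ⊗ K ⟶ W' ⊗ K` induced by `W ⟶ W'`. -/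
noncomputable abbrev tensorComplexMap {W W' : ModuleCat.{u} A} (f : W ⟶ W')
    (K : CochainComplex (ModuleCat.{u} A) ℤ) : tensorComplex W K ⟶ tensorComplex W' K :=
  (NatTrans.mapHomologicalComplex ((curriedTensor _).map f) _).app K

/-- The unit isomorphism `A ⊗ K ≅ K`. -/
noncomputable def tensorComplexUnitIso (K : CochainComplex (ModuleCat.{u} A) ℤ) :
    tensorComplex (.of A A) K ≅ K :=
  (NatIso.mapHomologicalComplex (leftUnitorNatIso (ModuleCat.{u} A)) _ ≪≫
    Functor.mapHomologicalComplexIdIso _ _).app K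

lemma tensorComplexMap_comp {W W' W'' : ModuleCat.{u} A} (f : W ⟶ W') (g : W' ⟶ W'')
    (K : CochainComplex (ModuleCat.{u} A) ℤ) :
    tensorComplexMap (f ≫ g) K = tensorComplexMap f K ≫ tensorComplexMap g K :=
  HomologicalComplex.hom_ext _ _ fun n ↦ comp_whiskerRight f g (K.X n)

lemma tensorComplexMap_comp_eq_zero (E : ShortComplex (ModuleCat.{u} A))
    (K : CochainComplex (ModuleCat.{u} A) ℤ) :
    tensorComplexMap E.f K ≫ tensorComplexMap E.g K = 0 := by
  rw [← tensorComplexMap_comp, E.zero]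
  exact HomologicalComplex.hom_ext _ _ fun n ↦ MonoidalPreadditive.zero_whiskerRight

lemma tensorComplex_shortExact {E : ShortComplex (ModuleCat.{u} A)} (hE : E.ShortExact)
    {K : CochainComplex (ModuleCat.{u} A) ℤ} (hK : ∀ n, Module.Flat A (K.X n)) :
    (ShortComplex.mk _ _ (tensorComplexMap_comp_eq_zero E K)).ShortExact := by
  have exact_fg := (ShortComplex.ShortExact.moduleCat_exact_iff_function_exact _).1 hE.exact
  refine HomologicalComplex.shortExact_of_degreewise_shortExact _ fun n ↦ ?_
  have := hK n
  exact ModuleCat.shortComplex_shortExact _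
    (rTensor_exact (K.X n) exact_fg hE.moduleCat_surjective_g)
    (Module.Flat.rTensor_preserves_injective_linearMap _ hE.moduleCat_injective_f)
    (LinearMap.rTensor_surjective (K.X n) hE.moduleCat_surjective_g)

variable (A B) [CommRing B] [Algebra A B] (W : Type u) [AddCommGroup W] [Module A W] [Module B W]
  [IsScalarTower A B W]

/-- For a `B`-module `W`, the functor `W ⊗[A] -` with values in `B`-modules. -/
noncomputable def tensorFunctor : ModuleCat.{u} A ⥤ ModuleCat.{u} B where
  obj X := .of B (W ⊗[A] X)
  map g := ModuleCat.ofHom (AlgebraTensorModule.lTensor B W g.hom)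
  map_id X := by ext : 1; simp
  map_comp f g := by ext : 1; simp [AlgebraTensorModule.lTensor_comp]

instance : (tensorFunctor A B W).Additive where
  map_add {X Y f g} := by
    ext : 1
    exact LinearMap.ext fun x ↦ congr($(LinearMap.lTensor_add W f.hom g.hom) x)

/-- On underlying `A`-modules, `tensorFunctor A B W` is the usual tensor product with `W`. -/
noncomputable def tensorFunctorCompRestrictScalars :
    tensorFunctor A B W ⋙ ModuleCat.restrictScalars.{u} (algebraMap A B) ≅
      (curriedTensor _).obj (ModuleCat.of A W) :=
  NatIso.ofComponents fun X ↦ LinearEquiv.toModuleIso (R := A) (m₁ := ModuleCat.isModule _)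
    (X₁ := (ModuleCat.restrictScalars.{u} (algebraMap A B)).obj (ModuleCat.of B (W ⊗[A] X)))
    (X₂ := W ⊗[A] X)
    { AddEquiv.refl (W ⊗[A] X) with
      map_smul' := fun r x ↦ algebraMap_smul B r (M := W ⊗[A] X) x }

variable {A B W}

/- If `L` is a termwise flat resolution of an object, then `L[1]` is a retract of the cone of
`B ⊗ L ⟶ T ⊗ L`, which is built from complexes of `B`-modules. -/
theorem isUniversalDescent_of_exact {M T : Type u} [AddCommGroup M] [Module A M] [AddCommGroup T]
    [Module A T] [Module B T] [IsScalarTower A B T] (s : B →ₗ[A] M) (q : M →ₗ[A] T)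
    (hs : Function.Injective (s ∘ₗ Algebra.linearMap A B))
    (hsq : Function.Exact (s ∘ₗ Algebra.linearMap A B) q) (hq : Function.Surjective q) :
    IsUniversalDescent (algebraMap A B) := by
  let := HasDerivedCategory.standard (ModuleCat.{u} A)
  intro P P_of_iso _ P_shift_neg P_cone P_retract P_restrictScalars X
  have P_tensor (W : Type u) [AddCommGroup W] [Module A W] [Module B W] [IsScalarTower A B W]
      (L : CochainComplex (ModuleCat.{u} A) ℤ) :
      P (DerivedCategory.Q.obj (tensorComplex (.of A W) L)) :=
    P_of_iso _ _ (DerivedCategory.Q.mapIso ((NatIso.mapHomologicalComplex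
      (tensorFunctorCompRestrictScalars A B W) _).app L))
      (P_restrictScalars (((tensorFunctor A B W).mapHomologicalComplex _).obj L))
  obtain ⟨L, r, hr, L_projective⟩ := exists_quasiIso_projective (DerivedCategory.Q.objPreimage X)
  have L_flat (n : ℤ) : Module.Flat A (L.X n) :=
    have := (IsProjective.iff_projective _).2 (L_projective n)
    inferInstance
  let F {W W' : ModuleCat.{u} A} (f : W ⟶ W') := DerivedCategory.Q.map (tensorComplexMap f L)
  let E : ShortComplex (ModuleCat.{u} A) := .mk
    (ModuleCat.ofHom (Algebra.linearMap A B) ≫ ModuleCat.ofHom s) (ModuleCat.ofHom q)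
    (by ext : 1; exact hsq.linearMap_comp_eq_zero)
  have hE : E.ShortExact := ModuleCat.shortComplex_shortExact _ hsq hs hq
  obtain ⟨δ, hM⟩ : ∃ δ, Triangle.mk (F (ModuleCat.ofHom (Algebra.linearMap A B)) ≫
      F (ModuleCat.ofHom s)) (F (ModuleCat.ofHom q)) δ ∈ distTriang _ := by
    have h := DerivedCategory.triangleOfSES_distinguished (tensorComplex_shortExact hE L_flat)
    simp only [F, ← Functor.map_comp, ← tensorComplexMap_comp]
    exact ⟨_, h⟩
  obtain ⟨Y, c, ω, hY⟩ :=
    distinguished_cocone_triangle (F (ModuleCat.ofHom s) ≫ F (ModuleCat.ofHom q))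
  obtain ⟨ρ⟩ := exists_retract_of_distTriang hM hY
  refine P_of_iso _ _ (shiftShiftNeg _ (1 : ℤ) ≪≫
    DerivedCategory.Q.mapIso (tensorComplexUnitIso L) ≪≫ asIso (DerivedCategory.Q.map r) ≪≫
    DerivedCategory.Q.objObjPreimageIso X) (P_shift_neg _ ?_)
  exact P_retract _ _ ρ.i ρ.r ρ.retract (P_cone _ hY (P_tensor B L) (P_tensor T L))

lemma IsUniversalDescent.of_comp {B C : Type u} [CommRing B] [CommRing C] (f : A →+* B)
    (g : B →+* C) (h : IsUniversalDescent (g.comp f)) : IsUniversalDescent f := by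
  let := HasDerivedCategory.standard (ModuleCat.{u} A)
  intro P P_of_iso P_shift P_shift_neg P_cone P_retract P_restrictScalars
  refine h P P_of_iso P_shift P_shift_neg P_cone P_retract fun K ↦ ?_
  refine P_of_iso _ _ (DerivedCategory.Q.mapIso
      (HomologicalComplex.Hom.isoOfComponents
        (fun n ↦ ((ModuleCat.restrictScalarsComp.{u} f g).app (K.X n)).symm) fun i j _ ↦ ?_))
    (P_restrictScalars (((ModuleCat.restrictScalars.{u} g).mapHomologicalComplex _).obj K))
  ext x
  rfl

end Descent

section Lifting

open TensorProduct

variable {A : Type*} [CommRing A] {a : A} {M N P : Type*} [AddCommGroup M] [Module A M]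
  [AddCommGroup N] [Module A N] [AddCommGroup P] [Module A P]

lemma mem_span_singleton_smul_top_iff {x : M} :
    x ∈ (Ideal.span {a} • ⊤ : Submodule A M) ↔ ∃ y, a • y = x := by
  simp [Submodule.ideal_span_singleton_smul, Submodule.mem_smul_pointwise_iff_exists]

lemma smodEq_span_singleton_pow_iff {n : ℕ} {x y : M} :
    x ≡ y [SMOD (Ideal.span {a} ^ n • ⊤ : Submodule A M)] ↔ ∃ z, a ^ n • z = x - y := by
  rw [SModEq.sub_mem, Ideal.span_singleton_pow, mem_span_singleton_smul_top_iff]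

lemma one_tmul_eq_zero_iff {x : M} :
    (1 : A ⧸ Ideal.span {a}) ⊗ₜ[A] x = 0 ↔ ∃ y, a • y = x := by
  rw [← mem_span_singleton_smul_top_iff, ← Submodule.Quotient.mk_eq_zero,
    ← quotTensorEquivQuotSMul_mk_one_tmul, LinearEquiv.map_eq_zero_iff]

lemma exists_one_tmul_eq (x : (A ⧸ Ideal.span {a}) ⊗[A] M) : ∃ y, 1 ⊗ₜ y = x :=
  TensorProduct.mk_surjective A M _ Ideal.Quotient.mk_surjective x

lemma isPrecomplete_span_singleton_pi {ι : Type*} [IsPrecomplete (Ideal.span {a}) M] :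
    IsPrecomplete (Ideal.span {a}) (ι → M) := by
  refine ⟨fun f hf ↦ ?_⟩
  have cauchy (i : ι) {m n : ℕ} (hmn : m ≤ n) :
      f m i ≡ f n i [SMOD (Ideal.span {a} ^ m • ⊤ : Submodule A M)] := by
    obtain ⟨z, hz⟩ := smodEq_span_singleton_pow_iff.1 (hf hmn)
    exact smodEq_span_singleton_pow_iff.2 ⟨z i, congr_fun hz i⟩
  choose L hL using fun i ↦ IsPrecomplete.prec ‹_› (cauchy i)
  refine ⟨L, fun n ↦ ?_⟩
  choose z hz using fun i ↦ smodEq_span_singleton_pow_iff.1 (hL i n)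
  exact smodEq_span_singleton_pow_iff.2 ⟨z, funext hz⟩

lemma isHausdorff_span_singleton_linearMap [IsHausdorff (Ideal.span {a}) N] :
    IsHausdorff (Ideal.span {a}) (M →ₗ[A] N) := by
  refine ⟨fun f hf ↦ LinearMap.ext fun x ↦ IsHausdorff.haus ‹_› _ fun n ↦ ?_⟩
  obtain ⟨g, hg⟩ := smodEq_span_singleton_pow_iff.1 (hf n)
  exact smodEq_span_singleton_pow_iff.2 ⟨g x, congr($hg x)⟩

lemma baseChange_injective_of_isSMulRegular {k : M →ₗ[A] N} {l : N →ₗ[A] P}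
    (hk : Function.Injective k) (hkl : Function.Exact k l) (ha : IsSMulRegular P a) :
    Function.Injective (k.baseChange (A ⧸ Ideal.span {a})) := by
  refine (injective_iff_map_eq_zero _).2 fun y hy ↦ ?_
  obtain ⟨x, rfl⟩ := exists_one_tmul_eq y
  rw [LinearMap.baseChange_tmul] at hy
  obtain ⟨z, hz⟩ := one_tmul_eq_zero_iff.1 hy
  have hlz : l z = 0 := ha.right_eq_zero_of_smul <| by
    rw [← map_smul, hz, hkl.apply_apply_eq_zero]
  obtain ⟨w, rfl⟩ := (hkl z).1 hlz
  exact one_tmul_eq_zero_iff.2 ⟨w, hk (by rw [map_smul, hz])⟩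

lemma exists_baseChange_retraction {k : M →ₗ[A] N} {l : N →ₗ[A] P} (hk : Function.Injective k)
    (hkl : Function.Exact k l) (hl : Function.Surjective l) (ha : IsSMulRegular P a)
    [Module.Projective (A ⧸ Ideal.span {a}) ((A ⧸ Ideal.span {a}) ⊗[A] P)] :
    ∃ r, r ∘ₗ k.baseChange (A ⧸ Ideal.span {a}) = LinearMap.id := by
  obtain ⟨σ, hσ⟩ := Module.projective_lifting_property
    (l.baseChange (A ⧸ Ideal.span {a})) LinearMap.id (LinearMap.lTensor_surjective _ hl)
  have exact_kl : Function.Exact (k.baseChange (A ⧸ Ideal.span {a})) (l.baseChange _) :=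
    lTensor_exact _ hkl hl
  exact ((exact_kl.split_tfae (baseChange_injective_of_isSMulRegular hk hkl ha)
    (LinearMap.lTensor_surjective _ hl)).out 0 1 rfl rfl).1 ⟨σ, hσ⟩

lemma exists_smul_eq_of_forall_exists (ha : IsSMulRegular N a) {f : M →ₗ[A] N}
    (hf : ∀ x, ∃ y, a • y = f x) : ∃ g : M →ₗ[A] N, a • g = f :=
  ⟨f.codRestrictOfInjective (LinearMap.lsmul A N a) ha hf,
    f.codRestrictOfInjective_comp (LinearMap.lsmul A N a) ha hf⟩

lemma exists_comp_eq_of_range_le_range [Module.Projective A P] {f : P →ₗ[A] N} {φ : M →ₗ[A] N}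
    (h : LinearMap.range f ≤ LinearMap.range φ) : ∃ g, φ ∘ₗ g = f := by
  obtain ⟨g, hg⟩ := Module.projective_lifting_property φ.rangeRestrict
    (f.codRestrict _ fun x ↦ h ⟨x, rfl⟩) φ.surjective_rangeRestrict
  exact ⟨g, LinearMap.ext fun x ↦ congr(Subtype.val ($hg x))⟩

/- The retraction of `k` modulo `a` gives an extension of `h` modulo `a`. -/
lemma exists_extension_add_smul {ι : Type*} {k : M →ₗ[A] ι →₀ A} {l : (ι →₀ A) →ₗ[A] P}
    (hk : Function.Injective k) (hkl : Function.Exact k l) (hl : Function.Surjective l)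
    (ha : IsSMulRegular P a) (haA : IsSMulRegular A a)
    [Module.Projective (A ⧸ Ideal.span {a}) ((A ⧸ Ideal.span {a}) ⊗[A] P)] (h : M →ₗ[A] A) :
    ∃ e g, a • g = h - e ∘ₗ k := by
  obtain ⟨r, hr⟩ := exists_baseChange_retraction hk hkl hl ha
  let hBar : (A ⧸ Ideal.span {a}) ⊗[A] M →ₗ[A] A ⧸ Ideal.span {a} :=
    (TensorProduct.rid A _).toLinearMap ∘ₗ h.lTensor _
  obtain ⟨e, he⟩ := Module.projective_lifting_property (Submodule.mkQ (Ideal.span {a}))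
    (hBar ∘ₗ r.restrictScalars A ∘ₗ TensorProduct.mk A (A ⧸ Ideal.span {a}) (ι →₀ A) 1)
    (Submodule.mkQ_surjective _)
  refine ⟨e, exists_smul_eq_of_forall_exists haA fun x ↦ ?_⟩
  have h_mk : Ideal.Quotient.mk (Ideal.span {a}) (e (k x)) = Ideal.Quotient.mk _ (h x) := by
    have hrx : r (1 ⊗ₜ k x) = 1 ⊗ₜ x := congr($hr (1 ⊗ₜ x))
    have hhx : hBar (1 ⊗ₜ x) = Ideal.Quotient.mk _ (h x) := by
      simp [hBar, Algebra.smul_def]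
    have := congr($he (k x))
    rw [← hhx, ← hrx]
    exact this
  obtain ⟨c, hc⟩ := Ideal.mem_span_singleton.1 (Ideal.Quotient.eq.1 h_mk.symm)
  exact ⟨c, hc.symm⟩

/- Restriction along `k` is a map from a precomplete to a separated module, so its surjectivity may
be checked modulo `a`. -/
lemma exists_extension_of_isAdicComplete [IsAdicComplete (Ideal.span {a}) A] {ι : Type*}
    {k : M →ₗ[A] ι →₀ A} {l : (ι →₀ A) →ₗ[A] P} (hk : Function.Injective k)
    (hkl : Function.Exact k l) (hl : Function.Surjective l) (ha : IsSMulRegular P a)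
    (haA : IsSMulRegular A a)
    [Module.Projective (A ⧸ Ideal.span {a}) ((A ⧸ Ideal.span {a}) ⊗[A] P)] (h : M →ₗ[A] A) :
    ∃ e, e ∘ₗ k = h := by
  let restrict : (ι → A) →ₗ[A] M →ₗ[A] A := k.lcomp A A ∘ₗ (Finsupp.llift A A A ι).toLinearMap
  have : IsPrecomplete (Ideal.span {a}) (ι → A) := isPrecomplete_span_singleton_pi
  have : IsHausdorff (Ideal.span {a}) (M →ₗ[A] A) := isHausdorff_span_singleton_linearMap
  obtain ⟨c, hc⟩ : ∃ c, restrict c = h := by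
    refine surjective_of_mkQ_comp_surjective (I := Ideal.span {a}) (fun h' ↦ ?_) h
    obtain ⟨h, rfl⟩ := Submodule.mkQ_surjective _ h'
    obtain ⟨e, g, hg⟩ := exists_extension_add_smul hk hkl hl ha haA h
    refine ⟨(Finsupp.llift A A A ι).symm e, ((Submodule.Quotient.eq _).2 ?_).symm⟩
    exact mem_span_singleton_smul_top_iff.2 ⟨g, by simp [restrict, hg, LinearMap.lcomp_apply']⟩
  exact ⟨Finsupp.llift A A A ι c, hc⟩

lemma exists_lift_of_exact [IsAdicComplete (Ideal.span {a}) A] (haA : IsSMulRegular A a)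
    (ha : IsSMulRegular P a)
    [Module.Projective (A ⧸ Ideal.span {a}) ((A ⧸ Ideal.span {a}) ⊗[A] P)]
    {i : A →ₗ[A] M} {φ : M →ₗ[A] N} (hi : Function.Injective i) (hiφ : Function.Exact i φ)
    (f : P →ₗ[A] N) (hf : LinearMap.range f ≤ LinearMap.range φ) : ∃ g, φ ∘ₗ g = f := by
  let l := Finsupp.linearCombination A (id : P → P)
  have hl : Function.Surjective l := Finsupp.linearCombination_id_surjective A P
  let k := (LinearMap.ker l).subtype
  have hkl : Function.Exact k l := l.exact_subtype_ker_map
  obtain ⟨g₀, hg₀⟩ : ∃ g₀, φ ∘ₗ g₀ = f ∘ₗ l :=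
    exists_comp_eq_of_range_le_range ((LinearMap.range_comp_le_range l f).trans hf)
  have hgk (y : LinearMap.ker l) : g₀ (k y) ∈ LinearMap.range i := by
    refine (hiφ _).1 ?_
    have : φ (g₀ (k y)) = f (l (k y)) := congr($hg₀ (k y))
    rw [this, hkl.apply_apply_eq_zero, map_zero]
  let h := (g₀ ∘ₗ k).codRestrictOfInjective i hi hgk
  obtain ⟨e, he⟩ := exists_extension_of_isAdicComplete (M := LinearMap.ker l)
    Subtype.val_injective hkl hl ha haA h
  have hge : (g₀ - i ∘ₗ e) ∘ₗ k = 0 := by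
    rw [LinearMap.sub_comp, LinearMap.comp_assoc, he, LinearMap.codRestrictOfInjective_comp,
      sub_self]
  obtain ⟨g, hg⟩ : ∃ g, g ∘ₗ l = g₀ - i ∘ₗ e :=
    (LinearMap.exact_lcomp_of_exact_of_surjective (M1 := LinearMap.ker l) M hkl hl _).1 hge
  refine ⟨g, (LinearMap.cancel_right hl).1 ?_⟩
  rw [LinearMap.comp_assoc, hg, LinearMap.comp_sub, ← LinearMap.comp_assoc,
    hiφ.linearMap_comp_eq_zero, LinearMap.zero_comp, sub_zero, hg₀]

end Lifting

section FlatCountablyPresented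

open scoped Cardinal

variable {A : Type*} [CommRing A] {M F : Type*} [AddCommGroup M] [Module A M] [AddCommGroup F]
  [Module A F]

lemma exists_finsupp_linearMap {ι : Type*} {g : ι → M →ₗ[A] F}
    (hg : ∀ x, (Function.support fun i ↦ g i x).Finite) :
    ∃ G : M →ₗ[A] ι →₀ F, ∀ x i, G x i = g i x := by
  let coe : (ι →₀ F) →ₗ[A] ι → F := Finsupp.lcoeFun
  have mem_range (x : M) : LinearMap.pi g x ∈ LinearMap.range coe :=
    ⟨Finsupp.ofSupportFinite _ (hg x), rfl⟩
  exact ⟨(LinearMap.pi g).codRestrictOfInjective coe DFunLike.coe_injective mem_range,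
    fun x ↦ congr_fun (LinearMap.codRestrictOfInjective_comp_apply _ _ _ mem_range x)⟩

lemma projective_finsupp {ι : Type*} [Module.Projective A F] :
    Module.Projective A (ι →₀ F) := by
  classical exact .of_equiv' (finsuppLequivDFinsupp (ι := ι) (M := F) A).symm

/- If `ρ n ∘ j` is eventually the identity at every point, then telescoping
`id = ∑ (ρ (n + 1) ∘ j - ρ n ∘ j)` exhibits `M` as a summand of `F^(ℕ)`. -/
lemma projective_of_telescope [Module.Projective A F] (j : M →ₗ[A] F) (ρ : ℕ → F →ₗ[A] M)
    (hρ₀ : ρ 0 = 0) (hρ_succ : ∀ n y, ρ (n + 1) (j (ρ n y)) = ρ n y)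
    (hρ : ∀ x, ∃ n, ∀ m ≥ n, ρ m (j x) = x) : Module.Projective A M := by
  let g (n : ℕ) : M →ₗ[A] F := j ∘ₗ (LinearMap.id - ρ n ∘ₗ j)
  have support_subset (x : M) {n : ℕ} (hn : ∀ m ≥ n, ρ m (j x) = x) :
      (Function.support fun m ↦ g m x) ⊆ Finset.range n := by
    intro m hm
    by_contra hmn
    exact hm (by simp [g, hn m (by simpa using hmn)])
  obtain ⟨G, hG⟩ := exists_finsupp_linearMap (g := g) fun x ↦
    have ⟨n, hn⟩ := hρ x
    (Finset.finite_toSet _).subset (support_subset x hn)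
  have := projective_finsupp (A := A) (F := F) (ι := ℕ)
  refine .of_split G (Finsupp.lsum A fun n ↦ ρ (n + 1)) (LinearMap.ext fun x ↦ ?_)
  obtain ⟨n, hn⟩ := hρ x
  have support_G : (G x).support ⊆ Finset.range n := by
    rw [← Finset.coe_subset, ← Finsupp.fun_support_eq, funext (hG x)]
    exact support_subset x hn
  calc (Finsupp.lsum A fun n ↦ ρ (n + 1)) (G x)
      = ∑ m ∈ Finset.range n, ρ (m + 1) (G x m) :=
        Finsupp.sum_of_support_subset _ support_G _ (by simp)
    _ = ∑ m ∈ Finset.range n, (ρ (m + 1) (j x) - ρ m (j x)) :=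
        Finset.sum_congr rfl fun m _ ↦ by simp [hG, g, hρ_succ]
    _ = x := by
        rw [Finset.sum_range_sub (fun m ↦ ρ m (j x)), hn n le_rfl, hρ₀, LinearMap.zero_apply,
          sub_zero]

lemma countable_generators {N : Submodule A M} (hN : N.spanRank ≤ ℵ₀) :
    N.generators.Countable := by
  rwa [← Cardinal.le_aleph0_iff_set_countable, N.generators_card]

lemma exists_span_range_eq_of_spanRank_le_aleph0 {N : Submodule A M}
    (hN : N.spanRank ≤ ℵ₀) : ∃ k : ℕ → M, Submodule.span A (Set.range k) = N := by
  obtain ⟨k, hk⟩ := ((countable_generators hN).insert 0).exists_eq_range (Set.insert_nonempty _ _)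
  exact ⟨k, by rw [← hk, Submodule.span_insert_zero, N.span_generators]⟩

lemma projective_of_forall_fg_exists_retraction [Module.Projective A F] (j : M →ₗ[A] F)
    (hM : (⊤ : Submodule A M).spanRank ≤ ℵ₀)
    (h : ∀ W : Submodule A M, W.FG →
      ∃ ρ : F →ₗ[A] M, (LinearMap.range ρ).FG ∧ ∀ x ∈ W, ρ (j x) = x) :
    Module.Projective A M := by
  obtain ⟨k, hk⟩ := exists_span_range_eq_of_spanRank_le_aleph0 hM
  let Φ := {ρ : F →ₗ[A] M // (LinearMap.range ρ).FG}
  have exists_next (n : ℕ) (ρ : Φ) : ∃ ρ' : Φ, (∀ y, ρ'.1 (j (ρ.1 y)) = ρ.1 y) ∧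
      ρ'.1 (j (k n)) = k n := by
    obtain ⟨ρ', hρ', h_id⟩ := h _ (ρ.2.sup (Submodule.fg_span_singleton (k n)))
    exact ⟨⟨ρ', hρ'⟩, fun y ↦ h_id _ (Submodule.mem_sup_left ⟨y, rfl⟩),
      h_id _ (Submodule.mem_sup_right (Submodule.mem_span_singleton_self _))⟩
  choose next next_ρ next_k using exists_next
  let ρ (n : ℕ) : Φ := n.rec ⟨0, by simpa using Submodule.fg_bot⟩ next
  have fixed_of_le {n m : ℕ} (hnm : n < m) (y : F) : (ρ m).1 (j ((ρ n).1 y)) = (ρ n).1 y := by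
    induction m, hnm using Nat.le_induction with
    | base => exact next_ρ n (ρ n) y
    | succ m _ ih => rw [← ih]; exact next_ρ m (ρ m) _
  refine projective_of_telescope j (fun n ↦ (ρ n).1) rfl (fun n ↦ next_ρ n (ρ n)) fun x ↦ ?_
  have hx : x ∈ Submodule.span A (Set.range k) := hk ▸ Submodule.mem_top
  induction hx using Submodule.span_induction with
  | mem x hx =>
    obtain ⟨n, rfl⟩ := hx
    refine ⟨n + 2, fun m hm ↦ ?_⟩
    have := fixed_of_le hm (j (k n))
    rwa [show (ρ (n + 1)).1 (j (k n)) = k n from next_k n (ρ n)] at this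
  | zero => exact ⟨0, by simp⟩
  | add x y _ _ hx hy =>
    obtain ⟨n, hn⟩ := hx
    obtain ⟨m, hm⟩ := hy
    refine ⟨max n m, fun l hl ↦ ?_⟩
    rw [map_add, map_add, hn l (le_of_max_le_left hl), hm l (le_of_max_le_right hl)]
  | smul c x _ hx =>
    obtain ⟨n, hn⟩ := hx
    exact ⟨n, fun m hm ↦ by rw [map_smul, map_smul, hn m hm]⟩

lemma exists_finset_linearCombination_eq {ι : Type*} (b : Module.Basis ι A F) {W : Submodule A F}
    (hW : W.FG) : ∃ (s : Finset ι) (r : F →ₗ[A] s →₀ A), Function.Surjective r ∧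
      ∀ x ∈ W, Finsupp.linearCombination A (fun i : s ↦ b i) (r x) = x := by
  classical
  obtain ⟨t, rfl⟩ := hW
  let s := t.biUnion fun x ↦ (b.repr x).support
  refine ⟨s, Finsupp.lcomapDomain Subtype.val Subtype.val_injective ∘ₗ b.repr,
    (Finsupp.comapDomain_surjective Subtype.val_injective).comp b.repr.surjective, fun x hx ↦ ?_⟩
  have support_subset : ((b.repr x).support : Set ι) ⊆ s := by
    rw [← b.mem_span_image]
    refine Submodule.span_le.mpr (fun y hy ↦ b.mem_span_image.mpr ?_) hx
    exact Finset.coe_subset.mpr (Finset.subset_biUnion_of_mem (fun x ↦ (b.repr x).support) hy)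
  have h : Finsupp.mapDomain Subtype.val (Finsupp.comapDomain (Subtype.val : s → ι) (b.repr x)
      Subtype.val_injective.injOn) = b.repr x :=
    Finsupp.mapDomain_comapDomain _ Subtype.val_injective _ (by simpa using support_subset)
  calc Finsupp.linearCombination A (fun i : s ↦ b i) (Finsupp.comapDomain _ (b.repr x) _)
      = Finsupp.linearCombination A b (b.repr x) := by
        conv_rhs => rw [← h, Finsupp.linearCombination_mapDomain]
        rfl
    _ = x := b.linearCombination_repr x

lemma projective_ker_of_flat {L Q : Type*} [AddCommGroup L] [Module A L] [AddCommGroup Q]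
    [Module A Q] [Module.Free A L] [Module.Flat A Q] {f : L →ₗ[A] Q}
    (hf : Function.Surjective f) (hf_ker : (LinearMap.ker f).spanRank ≤ ℵ₀) :
    Module.Projective A (LinearMap.ker f) := by
  refine projective_of_forall_fg_exists_retraction (LinearMap.ker f).subtype
    (by rwa [Submodule.spanRank_top]) fun W hW ↦ ?_
  obtain ⟨s, r, r_surj, hr⟩ := exists_finset_linearCombination_eq (Module.Free.chooseBasis A L)
    (hW.map (LinearMap.ker f).subtype)
  set e := Finsupp.linearCombination A fun i : s ↦ Module.Free.chooseBasis A L i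
  have hr_W (x : W) : e (r x.1) = x.1 := hr _ (Submodule.mem_map_of_mem x.2)
  have := Module.Finite.of_fg hW
  obtain ⟨n, a, y, hya, ha⟩ := Module.Flat.exists_factorization_of_comp_eq_zero_of_free
    (f := r ∘ₗ (LinearMap.ker f).subtype ∘ₗ W.subtype) (x := f ∘ₗ e)
    (LinearMap.ext fun x ↦ by simpa using congr_arg f (hr_W x))
  obtain ⟨y', rfl⟩ := Module.projective_lifting_property f y hf
  let d := (e - y' ∘ₗ a).codRestrict (LinearMap.ker f) fun z ↦ by
    simpa [sub_eq_zero] using LinearMap.congr_fun hya z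
  refine ⟨d ∘ₗ r, ?_, fun x hx ↦ Subtype.ext ?_⟩
  · rw [LinearMap.range_comp_of_range_eq_top _ (LinearMap.range_eq_top.mpr r_surj),
      LinearMap.range_eq_map]
    exact Module.Finite.fg_top.map d
  · have a_r : a (r x) = 0 := LinearMap.congr_fun ha ⟨x, hx⟩
    simp [d, a_r, hr_W ⟨x, hx⟩]

end FlatCountablyPresented

section CountablyPresented

open TensorProduct
open scoped Cardinal

variable {A : Type u} [CommRing A] {M N P : Type u} [AddCommGroup M] [Module A M]
  [AddCommGroup N] [Module A N] [AddCommGroup P] [Module A P]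

lemma spanRank_span_le_aleph0 {s : Set M} (hs : s.Countable) :
    (Submodule.span A s).spanRank ≤ ℵ₀ :=
  (Submodule.spanRank_span_le_card s).trans hs.le_aleph0

lemma spanRank_sup_le_aleph0 {W W' : Submodule A M} (hW : W.spanRank ≤ ℵ₀)
    (hW' : W'.spanRank ≤ ℵ₀) : (W ⊔ W').spanRank ≤ ℵ₀ :=
  Submodule.spanRank_sup_le_sum_spanRank.trans (Cardinal.add_le_aleph0.2 ⟨hW, hW'⟩)

lemma spanRank_comap_le_aleph0 {f : M →ₗ[A] N} (hf : Function.Surjective f)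
    (hf_ker : (LinearMap.ker f).spanRank ≤ ℵ₀) {W : Submodule A N} (hW : W.spanRank ≤ ℵ₀) :
    (W.comap f).spanRank ≤ ℵ₀ := by
  obtain ⟨g, hg⟩ := hf.hasRightInverse
  have comap_eq : W.comap f = Submodule.span A (g '' W.generators) ⊔ LinearMap.ker f := by
    rw [← Submodule.comap_map_eq, Submodule.map_span, hg.image_image, W.span_generators]
  rw [comap_eq]
  exact spanRank_sup_le_aleph0 (spanRank_span_le_aleph0 ((countable_generators hW).image g)) hf_ker

lemma spanRank_top_tensorProduct_le_aleph0 (hM : (⊤ : Submodule A M).spanRank ≤ ℵ₀)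
    (hN : (⊤ : Submodule A N).spanRank ≤ ℵ₀) :
    (⊤ : Submodule A (M ⊗[A] N)).spanRank ≤ ℵ₀ := by
  rw [← TensorProduct.map₂_mk_top_top_eq_top, ← Submodule.span_generators (⊤ : Submodule A M),
    ← Submodule.span_generators (⊤ : Submodule A N), Submodule.map₂_span_span]
  exact spanRank_span_le_aleph0
    ((countable_generators hM).image2 (countable_generators hN) _)

lemma spanRank_ker_tensorProductMap_le_aleph0 {f : N →ₗ[A] M} {g : M →ₗ[A] P}
    (hM : (⊤ : Submodule A M).spanRank ≤ ℵ₀) (hN : (⊤ : Submodule A N).spanRank ≤ ℵ₀)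
    (hfg : Function.Exact f g) (hg : Function.Surjective g) :
    (LinearMap.ker (TensorProduct.map g g)).spanRank ≤ ℵ₀ := by
  rw [TensorProduct.map_ker hfg hg hfg hg]
  exact spanRank_sup_le_aleph0
    ((Submodule.spanRank_range_le _).trans (spanRank_top_tensorProduct_le_aleph0 hM hN))
    ((Submodule.spanRank_range_le _).trans (spanRank_top_tensorProduct_le_aleph0 hN hM))

lemma spanRank_top_mvPolynomial_le_aleph0 (n : ℕ) :
    (⊤ : Submodule A (MvPolynomial (Fin n) A)).spanRank ≤ ℵ₀ := by
  rw [← (MvPolynomial.basisMonomials (Fin n) A).span_eq]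
  exact spanRank_span_le_aleph0 (Set.countable_range _)

lemma spanRank_restrictScalars_le_aleph0 {T : Type u} [CommRing T] [Algebra A T]
    (hT : (⊤ : Submodule A T).spanRank ≤ ℵ₀) {I : Ideal T} (hI : I.FG) :
    (I.restrictScalars A).spanRank ≤ ℵ₀ := by
  obtain ⟨t, rfl⟩ := hI
  rw [← Ideal.submodule_span_eq, ← Submodule.span_smul_of_span_eq_top
    (Submodule.span_generators (⊤ : Submodule A T))]
  exact spanRank_span_le_aleph0 ((countable_generators hT).image2 t.countable_toSet _)

lemma spanRank_top_le_aleph0_of_finiteType (T : Type u) [CommRing T] [Algebra A T]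
    [h : Algebra.FiniteType A T] : (⊤ : Submodule A T).spanRank ≤ ℵ₀ := by
  obtain ⟨n, f, hf⟩ := Algebra.FiniteType.iff_quotient_mvPolynomial''.1 h
  rw [← LinearMap.range_eq_top.2 (show Function.Surjective f.toLinearMap from hf)]
  exact (Submodule.spanRank_range_le _).trans (spanRank_top_mvPolynomial_le_aleph0 n)

lemma exists_free_presentation_of_finitePresentation (T : Type u) [CommRing T] [Algebra A T]
    [Algebra.FinitePresentation A T] :
    ∃ (n : ℕ) (p : MvPolynomial (Fin n) A →ₗ[A] T), Function.Surjective p ∧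
      (LinearMap.ker p).spanRank ≤ ℵ₀ := by
  obtain ⟨n, f, hf, hf_ker⟩ := Algebra.FinitePresentation.out (R := A) (A := T)
  refine ⟨n, f.toLinearMap, hf, ?_⟩
  have ker_eq : LinearMap.ker f.toLinearMap = (RingHom.ker f.toRingHom).restrictScalars A := by
    ext; rfl
  rw [ker_eq]
  exact spanRank_restrictScalars_le_aleph0
    (spanRank_top_le_aleph0_of_finiteType (MvPolynomial (Fin n) A)) hf_ker

lemma projective_of_exact_of_projective_ker {Z F L Q : Type u} [AddCommGroup Z] [Module A Z]
    [AddCommGroup F] [Module A F] [AddCommGroup L] [Module A L] [AddCommGroup Q] [Module A Q]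
    [Module.Projective A L] [Module.Projective A F] {p : L →ₗ[A] Q} (hp : Function.Surjective p)
    [Module.Projective A (LinearMap.ker p)] {k : Z →ₗ[A] F} {l : F →ₗ[A] Q}
    (hk : Function.Injective k) (hkl : Function.Exact k l) (hl : Function.Surjective l) :
    Module.Projective A Z := by
  have projective_of (M : Type u) [AddCommGroup M] [Module A M] [Module.Projective A M] :
      Projective (ModuleCat.of A M) := (IsProjective.iff_projective M).1 inferInstance
  have shortExact_l := ModuleCat.shortComplex_shortExact
    (ModuleCat.shortComplexOfCompEqZero k l hkl.linearMap_comp_eq_zero) hkl hk hl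
  rw [IsProjective.iff_projective, projective_iff_hasProjectiveDimensionLT_one]
  refine (shortExact_l.hasProjectiveDimensionLT_X₃_iff 0 (projective_of F)).1 <|
    ((LinearMap.shortExact_shortComplexKer hp).hasProjectiveDimensionLT_X₃_iff 0
      (projective_of L)).2 ?_
  exact projective_iff_hasProjectiveDimensionLT_one.1 (projective_of (LinearMap.ker p))

/- A flat countably presented module has projective dimension at most one. -/
lemma projective_of_exact_of_flat {E Z F Q : Type u} [CommRing E] [Algebra A E]
    [Algebra.FinitePresentation A E] [AddCommGroup Z] [Module A Z] [AddCommGroup F] [Module A F]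
    [AddCommGroup Q] [Module A Q] [Module.Flat A Q] [Module.Projective A F] {g : E →ₗ[A] Q}
    (hg : Function.Surjective g) (hg_ker : (LinearMap.ker g).spanRank ≤ ℵ₀) {k : Z →ₗ[A] F}
    {l : F →ₗ[A] Q} (hk : Function.Injective k) (hkl : Function.Exact k l)
    (hl : Function.Surjective l) : Module.Projective A Z := by
  obtain ⟨n, p, hp, hp_ker⟩ := exists_free_presentation_of_finitePresentation (A := A) E
  have hgp : Function.Surjective (g ∘ₗ p) := hg.comp hp
  have hgp_ker : (LinearMap.ker (g ∘ₗ p)).spanRank ≤ ℵ₀ := by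
    rw [LinearMap.ker_comp]
    exact spanRank_comap_le_aleph0 hp hp_ker hg_ker
  have := projective_ker_of_flat hgp hgp_ker
  exact projective_of_exact_of_projective_ker hgp hk hkl hl

end CountablyPresented

section FaithfullyFlat

open TensorProduct

/- After base change to `T`, multiplication splits the unit map, so `T ⊗ C` is a summand of the free
module `T ⊗ T`. -/
lemma flat_of_exact_of_faithfullyFlat {A T C : Type*} [CommRing A] [CommRing T] [Algebra A T]
    [AddCommGroup C] [Module A C] [Module.FaithfullyFlat A T] {q : T →ₗ[A] C}
    (hq : Function.Surjective q) (hTq : Function.Exact (Algebra.linearMap A T) q) :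
    Module.Flat A C := by
  have exact_baseChange :
      Function.Exact ((Algebra.linearMap A T).baseChange T) (q.baseChange T) :=
    lTensor_exact T hTq hq
  let mul : T ⊗[A] T →ₗ[T] T ⊗[A] A := (Algebra.TensorProduct.rid A T T).symm.toLinearMap ∘ₗ
    (Algebra.TensorProduct.lmul'' (R := A) (S := T)).toLinearMap
  have mul_comp : mul ∘ₗ (Algebra.linearMap A T).baseChange T = LinearMap.id := by
    ext
    simp [mul, Algebra.TensorProduct.lmul'']
  have injective_baseChange : Function.Injective ((Algebra.linearMap A T).baseChange T) :=
    LinearMap.injective_of_comp_eq_id _ _ mul_comp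
  obtain ⟨σ, hσ⟩ := ((exact_baseChange.split_tfae injective_baseChange
    (LinearMap.lTensor_surjective T hq)).out 0 1 rfl rfl).2 ⟨mul, mul_comp⟩
  have := Module.Flat.of_retract σ (q.baseChange T) hσ
  exact Module.Flat.of_flat_tensorProduct A C T

variable {A : Type*} (A' : Type*) [CommRing A] [CommRing A'] [Algebra A A'] (S M : Type*)
  [CommRing S] [Algebra A S] [AddCommGroup M] [Module A M]

lemma baseChange_mk_one_injective [Module.FaithfullyFlat A' (A' ⊗[A] S)] :
    Function.Injective ((TensorProduct.mk A S M 1).baseChange A') := by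
  let e := AlgebraTensorModule.distribBaseChange A A' S M
  have comp_eq : e.toLinearMap ∘ₗ (TensorProduct.mk A S M 1).baseChange A' =
      TensorProduct.mk A' (A' ⊗[A] S) (A' ⊗[A] M) 1 := by
    ext
    simp [e, Algebra.TensorProduct.one_def]
  rw [← e.injective.of_comp_iff, ← LinearEquiv.coe_toLinearMap, ← LinearMap.coe_comp, comp_eq]
  exact Module.FaithfullyFlat.tensorProduct_mk_injective (A' ⊗[A] M)

lemma baseChange_algebra_linearMap_injective [Module.FaithfullyFlat A' (A' ⊗[A] S)] :
    Function.Injective ((Algebra.linearMap A S).baseChange A') := by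
  have linearMap_eq : Algebra.linearMap A S =
      (TensorProduct.rid A S).toLinearMap ∘ₗ TensorProduct.mk A S A 1 := by
    ext
    simp
  rw [linearMap_eq, LinearMap.baseChange_comp]
  exact ((TensorProduct.rid A S).baseChange A A').injective.comp
    (baseChange_mk_one_injective A' S A)

variable {S M}

lemma exact_algebra_linearMap_baseChange {p : S →ₗ[A] M} (hp : Function.Surjective p)
    (hSp : Function.Exact (Algebra.linearMap A S) p) :
    Function.Exact (Algebra.linearMap A' (A' ⊗[A] S)) (p.baseChange A') := by
  have linearMap_eq : Algebra.linearMap A' (A' ⊗[A] S) = (Algebra.linearMap A S).baseChange A' ∘ₗ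
      (Algebra.TensorProduct.rid A A' A').symm.toLinearMap := by
    ext
    simp
  rw [linearMap_eq]
  exact (Function.Surjective.comp_exact_iff_exact
    (Algebra.TensorProduct.rid A A' A').symm.surjective).2 (lTensor_exact A' hSp hp)

end FaithfullyFlat

section ReductionModulo

open TensorProduct

variable {A : Type*} [CommRing A] {a : A} {M N P : Type*} [AddCommGroup M] [Module A M]
  [AddCommGroup N] [Module A N] [AddCommGroup P] [Module A P]

lemma exists_smul_eq_of_smul_eq_map {k : M →ₗ[A] N}
    (hk : Function.Injective (k.baseChange (A ⧸ Ideal.span {a}))) {x : M} {y : N}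
    (h : a • y = k x) : ∃ z, a • z = x := by
  refine one_tmul_eq_zero_iff.1 (hk ?_)
  rw [map_zero, LinearMap.baseChange_tmul]
  exact one_tmul_eq_zero_iff.2 ⟨y, h⟩

lemma isSMulRegular_of_baseChange_injective {k : M →ₗ[A] N} {l : N →ₗ[A] P}
    (hk : Function.Injective (k.baseChange (A ⧸ Ideal.span {a}))) (hkl : Function.Exact k l)
    (hl : Function.Surjective l) (ha : IsSMulRegular N a) : IsSMulRegular P a := by
  refine IsSMulRegular.of_right_eq_zero_of_smul fun x hx ↦ ?_
  obtain ⟨y, rfl⟩ := hl x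
  rw [← map_smul] at hx
  obtain ⟨z, hz⟩ := (hkl _).1 hx
  obtain ⟨w, rfl⟩ := exists_smul_eq_of_smul_eq_map hk hz.symm
  rw [map_smul] at hz
  rw [← ha hz, hkl.apply_apply_eq_zero]

lemma exists_pow_smul_eq_of_pow_smul_eq_map {k : M →ₗ[A] N}
    (hk : Function.Injective (k.baseChange (A ⧸ Ideal.span {a}))) (ha : IsSMulRegular N a)
    (n : ℕ) {x : M} {y : N} (h : a ^ n • y = k x) : ∃ z, a ^ n • z = x := by
  induction n generalizing x with
  | zero => exact ⟨x, by rw [pow_zero, one_smul]⟩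
  | succ n ih =>
    rw [pow_succ', mul_smul] at h
    obtain ⟨z, rfl⟩ := exists_smul_eq_of_smul_eq_map hk h
    rw [map_smul] at h
    obtain ⟨w, rfl⟩ := ih (ha h)
    exact ⟨w, by rw [pow_succ', mul_smul]⟩

lemma eq_zero_of_forall_exists_pow_smul_eq [IsHausdorff (Ideal.span {a}) M] {x : M}
    (h : ∀ n : ℕ, ∃ y, a ^ n • y = x) : x = 0 :=
  IsHausdorff.haus ‹_› _ fun n ↦ smodEq_span_singleton_pow_iff.2 (by rw [sub_zero]; exact h n)

lemma injective_of_baseChange_injective [IsHausdorff (Ideal.span {a}) M] {k : M →ₗ[A] N}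
    (hk : Function.Injective (k.baseChange (A ⧸ Ideal.span {a}))) (ha : IsSMulRegular N a) :
    Function.Injective k := by
  refine (injective_iff_map_eq_zero _).2 fun x hx ↦ ?_
  exact eq_zero_of_forall_exists_pow_smul_eq fun n ↦
    exists_pow_smul_eq_of_pow_smul_eq_map hk ha n (by rw [hx, smul_zero (a ^ n)])

lemma isHausdorff_of_exact [IsPrecomplete (Ideal.span {a}) M] [IsHausdorff (Ideal.span {a}) N]
    {k : M →ₗ[A] N} {l : N →ₗ[A] P}
    (hk : Function.Injective (k.baseChange (A ⧸ Ideal.span {a}))) (hkl : Function.Exact k l)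
    (hl : Function.Surjective l) (ha : IsSMulRegular N a) : IsHausdorff (Ideal.span {a}) P := by
  refine ⟨fun x hx ↦ ?_⟩
  obtain ⟨y, rfl⟩ := hl x
  have approx (n : ℕ) : ∃ u w, a ^ n • w = y - k u := by
    obtain ⟨z, hz⟩ := smodEq_span_singleton_pow_iff.1 (hx n)
    obtain ⟨w, rfl⟩ := hl z
    obtain ⟨u, hu⟩ := (hkl (y - a ^ n • w)).1 (by rw [map_sub, map_smul, hz, sub_zero, sub_self])
    exact ⟨u, w, by rw [hu, sub_sub_cancel]⟩
  choose u w hw using approx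
  have cauchy {m n : ℕ} (hmn : m ≤ n) :
      u m ≡ u n [SMOD (Ideal.span {a} ^ m • ⊤ : Submodule A M)] := by
    refine smodEq_span_singleton_pow_iff.2 (exists_pow_smul_eq_of_pow_smul_eq_map hk ha m
      (y := a ^ (n - m) • w n - w m) ?_)
    rw [smul_sub, ← mul_smul, ← pow_add, Nat.add_sub_cancel' hmn, hw, hw, map_sub,
      sub_sub_sub_cancel_left]
  obtain ⟨L, hL⟩ := IsPrecomplete.prec ‹_› cauchy
  refine (hkl y).2 ⟨L, .symm (sub_eq_zero.1 ?_)⟩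
  refine eq_zero_of_forall_exists_pow_smul_eq (a := a) fun n ↦ ?_
  obtain ⟨c, hc⟩ := smodEq_span_singleton_pow_iff.1 (hL n)
  exact ⟨w n + k c, by rw [smul_add, hw, ← map_smul, hc, map_sub, sub_add_sub_cancel]⟩

variable (N) in
lemma baseChange_lTensor_injective {A' : Type*} [CommRing A'] [Algebra A A']
    [Module.Flat A' (A' ⊗[A] N)] {k : M →ₗ[A] P} (hk : Function.Injective (k.baseChange A')) :
    Function.Injective ((k.lTensor N).baseChange A') := by
  have comp_eq : (AlgebraTensorModule.distribBaseChange A A' N P).toLinearMap ∘ₗ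
      (k.lTensor N).baseChange A' = (k.baseChange A').lTensor (A' ⊗[A] N) ∘ₗ
        (AlgebraTensorModule.distribBaseChange A A' N M).toLinearMap := by
    ext
    simp
  refine Function.Injective.of_comp (f := AlgebraTensorModule.distribBaseChange A A' N P) ?_
  rw [← LinearEquiv.coe_toLinearMap, ← LinearMap.coe_comp, comp_eq, LinearMap.coe_comp]
  exact (Module.Flat.lTensor_preserves_injective_linearMap _ hk).comp (LinearEquiv.injective _)

lemma isSMulRegular_tensorProduct
    [Module.Flat (A ⧸ Ideal.span {a}) ((A ⧸ Ideal.span {a}) ⊗[A] N)] (hN : IsSMulRegular N a)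
    (hM : IsSMulRegular M a) : IsSMulRegular (N ⊗[A] M) a := by
  classical
  let l := Finsupp.linearCombination A (id : M → M)
  have hl : Function.Surjective l := Finsupp.linearCombination_id_surjective A M
  have hkl : Function.Exact (LinearMap.ker l).subtype l := l.exact_subtype_ker_map
  have regular_free : IsSMulRegular (N ⊗[A] (M →₀ A)) a :=
    ((TensorProduct.finsuppScalarRight A A N M).isSMulRegular_congr a).2 hN.finsupp
  exact isSMulRegular_of_baseChange_injective
    (baseChange_lTensor_injective N
      (baseChange_injective_of_isSMulRegular Subtype.val_injective hkl hM))
    (lTensor_exact (M := LinearMap.ker l) N hkl hl) (LinearMap.lTensor_surjective N hl) regular_free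

end ReductionModulo

section Amalgamation

variable {A : Type*} [CommRing A] {X S T Q Z F : Type*} [AddCommGroup X] [Module A X]
  [AddCommGroup S] [Module A S] [AddCommGroup T] [Module A T] [AddCommGroup Q] [Module A Q]
  [AddCommGroup Z] [Module A Z] [AddCommGroup F] [Module A F]

/-- The amalgamated sum of `S` and `F` over `Z`. The quotient identifies `(n z, 0)` with
`(0, -k z)`, so it is the pushout of `n` and `-k`. -/
abbrev AmalgamatedSum (n : Z →ₗ[A] S) (k : Z →ₗ[A] F) : Type _ :=
  (S × F) ⧸ LinearMap.range (n.prod k)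

namespace AmalgamatedSum

variable {i : X →ₗ[A] S} {φ : S →ₗ[A] T} {q : T →ₗ[A] Q} {n : Z →ₗ[A] S} {k : Z →ₗ[A] F}
  {l : F →ₗ[A] Q} {m : F →ₗ[A] T}

variable (n k) in
/-- The canonical map from the first summand. -/
def inl : S →ₗ[A] AmalgamatedSum n k :=
  (LinearMap.range (n.prod k)).mkQ ∘ₗ LinearMap.inl A S F

/-- The map induced by `φ` and `-m`. -/
def desc (φ : S →ₗ[A] T) (m : F →ₗ[A] T) (h : φ ∘ₗ n = m ∘ₗ k) : AmalgamatedSum n k →ₗ[A] T :=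
  (LinearMap.range (n.prod k)).liftQ (φ.coprod (-m)) <| by
    rintro _ ⟨z, rfl⟩
    simpa [sub_eq_zero, ← sub_eq_add_neg] using congr($h z)

lemma inl_comp_injective (hi : Function.Injective i) (hk : Function.Injective k) :
    Function.Injective (inl n k ∘ₗ i) := by
  refine (injective_iff_map_eq_zero _).2 fun x hx ↦ ?_
  obtain ⟨z, hz⟩ := (Submodule.Quotient.mk_eq_zero _).1 hx
  have hkz : k z = 0 := congr(($hz).2)
  have hnz : n z = i x := congr(($hz).1)
  rw [(map_eq_zero_iff k hk).1 hkz, map_zero] at hnz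
  exact (map_eq_zero_iff i hi).1 hnz.symm

lemma exact_inl_comp_desc (hiφ : Function.Exact i φ) (hφq : Function.Exact φ q)
    (hkl : Function.Exact k l) (hqm : q ∘ₗ m = l) (h : φ ∘ₗ n = m ∘ₗ k) :
    Function.Exact (inl n k ∘ₗ i) (desc φ m h) := by
  refine LinearMap.exact_of_comp_eq_zero_of_ker_le_range ?_ ?_
  · ext x
    simpa [inl, desc] using hiφ.apply_apply_eq_zero x
  · rintro y hy
    obtain ⟨⟨s, f⟩, rfl⟩ := Submodule.mkQ_surjective _ y
    have hsf : φ s = m f := by simpa [desc, sub_eq_zero, ← sub_eq_add_neg] using hy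
    have hlf : l f = 0 := by
      rw [← hqm, LinearMap.comp_apply, ← hsf, hφq.apply_apply_eq_zero]
    obtain ⟨z, rfl⟩ := (hkl f).1 hlf
    obtain ⟨x, hx⟩ := (hiφ (s - n z)).1 <| by
      rw [map_sub, hsf, sub_eq_zero]
      exact congr($h z).symm
    exact ⟨x, (Submodule.Quotient.eq _).2 ⟨-z, by simp [hx]⟩⟩

lemma desc_surjective (hφq : Function.Exact φ q) (hl : Function.Surjective l) (hqm : q ∘ₗ m = l)
    (h : φ ∘ₗ n = m ∘ₗ k) : Function.Surjective (desc φ m h) := by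
  intro t
  obtain ⟨f, hf⟩ := hl (q t)
  obtain ⟨s, hs⟩ := (hφq (t - m f)).1 <| by
    rw [map_sub, ← hf, ← hqm, LinearMap.comp_apply, sub_self]
  exact ⟨Submodule.Quotient.mk (s, -f), by simp [desc, hs]⟩

end AmalgamatedSum

end Amalgamation

section AdicallyComplete

open TensorProduct
open scoped Cardinal

lemma exact_mk_one_rTensor {A S B : Type*} (N : Type*) [CommRing A] [CommRing S] [Algebra A S]
    [AddCommGroup B] [Module A B] [AddCommGroup N] [Module A N] {p : S →ₗ[A] B}
    (hp : Function.Surjective p) (hSp : Function.Exact (Algebra.linearMap A S) p) :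
    Function.Exact (TensorProduct.mk A S N 1) (p.rTensor N) := by
  have mk_eq : TensorProduct.mk A S N 1 =
      (Algebra.linearMap A S).rTensor N ∘ₗ (TensorProduct.lid A N).symm.toLinearMap := by
    ext
    simp
  rw [mk_eq]
  exact (Function.Surjective.comp_exact_iff_exact (TensorProduct.lid A N).symm.surjective).2
    (rTensor_exact N hSp hp)

variable {A S B : Type u} [CommRing A] [CommRing S] [Algebra A S] [AddCommGroup B] [Module A B]
  {p : S →ₗ[A] B}

lemma flat_baseChange_of_exact (A' : Type u) [CommRing A'] [Algebra A A']
    [Module.FaithfullyFlat A' (A' ⊗[A] S)] (hp : Function.Surjective p)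
    (hSp : Function.Exact (Algebra.linearMap A S) p) : Module.Flat A' (A' ⊗[A] B) :=
  flat_of_exact_of_faithfullyFlat (LinearMap.lTensor_surjective A' hp)
    (exact_algebra_linearMap_baseChange A' hp hSp)

lemma projective_baseChange_of_exact {A' Z F : Type u} [CommRing A'] [Algebra A A']
    [AddCommGroup Z] [Module A Z] [AddCommGroup F] [Module A F] [Module.Projective A F]
    [Module.FaithfullyFlat A' (A' ⊗[A] S)] [Algebra.FinitePresentation A' (A' ⊗[A] S)]
    (hp : Function.Surjective p) (hSp : Function.Exact (Algebra.linearMap A S) p)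
    {k : Z →ₗ[A] F} {l : F →ₗ[A] B ⊗[A] B} (hk : Function.Injective (k.baseChange A'))
    (hkl : Function.Exact k l) (hl : Function.Surjective l) :
    Module.Projective A' (A' ⊗[A] Z) := by
  have := flat_baseChange_of_exact A' hp hSp
  let e := AlgebraTensorModule.distribBaseChange A A' B B
  have : Module.Flat A' (A' ⊗[A] (B ⊗[A] B)) := .of_linearEquiv e
  have : Algebra.FinitePresentation A' ((A' ⊗[A] S) ⊗[A'] (A' ⊗[A] S)) :=
    .trans A' (A' ⊗[A] S) _
  let pp := TensorProduct.map (p.baseChange A') (p.baseChange A')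
  have hp' : Function.Surjective (p.baseChange A') := LinearMap.lTensor_surjective A' hp
  have ker_pp : (LinearMap.ker (e.symm.toLinearMap ∘ₗ pp)).spanRank ≤ ℵ₀ := by
    rw [LinearEquiv.ker_comp]
    exact spanRank_ker_tensorProductMap_le_aleph0 (spanRank_top_le_aleph0_of_finiteType _)
      (spanRank_top_le_aleph0_of_finiteType A') (exact_algebra_linearMap_baseChange A' hp hSp) hp'
  have exact_kl : Function.Exact (k.baseChange A') (l.baseChange A') := lTensor_exact A' hkl hl
  exact projective_of_exact_of_flat (e.symm.surjective.comp (map_surjective hp' hp')) ker_pp hk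
    exact_kl (LinearMap.lTensor_surjective A' hl)

variable {a : A} [IsHausdorff (Ideal.span {a}) S]
  [Module.FaithfullyFlat (A ⧸ Ideal.span {a}) ((A ⧸ Ideal.span {a}) ⊗[A] S)]

lemma mk_one_injective_of_exact [IsPrecomplete (Ideal.span {a}) A] (hS : IsSMulRegular S a)
    (hp : Function.Surjective p) (hSp : Function.Exact (Algebra.linearMap A S) p) :
    Function.Injective (TensorProduct.mk A S B 1) := by
  have mod_injective := baseChange_algebra_linearMap_injective (A := A) (A ⧸ Ideal.span {a}) S
  have hB := isSMulRegular_of_baseChange_injective mod_injective hSp hp hS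
  have := isHausdorff_of_exact mod_injective hSp hp hS
  exact injective_of_baseChange_injective (baseChange_mk_one_injective (A ⧸ Ideal.span {a}) S B)
    (isSMulRegular_tensorProduct hS hB)

variable [IsAdicComplete (Ideal.span {a}) A]
  [Algebra.FinitePresentation (A ⧸ Ideal.span {a}) ((A ⧸ Ideal.span {a}) ⊗[A] S)]

/- Modulo `a`, the module `B ⊗ B` is flat and countably presented, so `Z` becomes projective. -/
lemma exists_lift_of_presentation (hS : IsSMulRegular S a) (hp : Function.Surjective p)
    (hSp : Function.Exact (Algebra.linearMap A S) p) {Z ι : Type u} [AddCommGroup Z] [Module A Z]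
    {k : Z →ₗ[A] ι →₀ A} {l : (ι →₀ A) →ₗ[A] B ⊗[A] B} (hk : Function.Injective k)
    (hkl : Function.Exact k l) (hl : Function.Surjective l) {f : Z →ₗ[A] S ⊗[A] B}
    (hf : p.rTensor B ∘ₗ f = 0) : ∃ n, (TensorProduct.mk A S B 1 ∘ₗ p) ∘ₗ n = f := by
  have mod_injective := baseChange_algebra_linearMap_injective (A := A) (A ⧸ Ideal.span {a}) S
  have hB : IsSMulRegular B a := isSMulRegular_of_baseChange_injective mod_injective hSp hp hS
  have := flat_baseChange_of_exact (A ⧸ Ideal.span {a}) hp hSp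
  have := projective_baseChange_of_exact hp hSp
    (baseChange_injective_of_isSMulRegular hk hkl (isSMulRegular_tensorProduct hB hB)) hkl hl
  have hi : Function.Injective (Algebra.linearMap A S) :=
    injective_of_baseChange_injective mod_injective hS
  have hA : IsSMulRegular A a := hS.of_injective _ hi
  refine exists_lift_of_exact hA (hA.finsupp.of_injective k hk) hi
    ((mk_one_injective_of_exact hS hp hSp).comp_exact_iff_exact.2 hSp) f ?_
  rintro _ ⟨z, rfl⟩
  obtain ⟨s, hs⟩ := (exact_mk_one_rTensor B hp hSp _).1 congr($hf z)
  obtain ⟨s, rfl⟩ := hp s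
  exact ⟨s, hs⟩

lemma isUniversalDescent_algebraMap_of_exact (hS : IsSMulRegular S a)
    (hp : Function.Surjective p) (hSp : Function.Exact (Algebra.linearMap A S) p) :
    IsUniversalDescent (algebraMap A S) := by
  let φ : S →ₗ[A] S ⊗[A] B := TensorProduct.mk A S B 1 ∘ₗ p
  have hi : Function.Injective (Algebra.linearMap A S) := injective_of_baseChange_injective
    (baseChange_algebra_linearMap_injective (A ⧸ Ideal.span {a}) S) hS
  have hiφ : Function.Exact (Algebra.linearMap A S) φ :=
    (mk_one_injective_of_exact (a := a) hS hp hSp).comp_exact_iff_exact.2 hSp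
  have hφq : Function.Exact φ (p.rTensor B) :=
    hp.comp_exact_iff_exact.2 (exact_mk_one_rTensor B hp hSp)
  let l := Finsupp.linearCombination A (id : B ⊗[A] B → B ⊗[A] B)
  have hl : Function.Surjective l := Finsupp.linearCombination_id_surjective A _
  let k := (LinearMap.ker l).subtype
  have hkl : Function.Exact k l := l.exact_subtype_ker_map
  have hk : Function.Injective k := Subtype.val_injective
  obtain ⟨m, hqm⟩ := Module.projective_lifting_property (p.rTensor B) l
    (LinearMap.rTensor_surjective B hp)
  obtain ⟨n, hn⟩ : ∃ n, φ ∘ₗ n = m ∘ₗ k :=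
    exists_lift_of_presentation (Z := LinearMap.ker l) hS hp hSp hk hkl hl
      (by rw [← LinearMap.comp_assoc, hqm, hkl.linearMap_comp_eq_zero])
  exact isUniversalDescent_of_exact (AmalgamatedSum.inl n k) (AmalgamatedSum.desc φ m hn)
    (AmalgamatedSum.inl_comp_injective hi hk)
    (AmalgamatedSum.exact_inl_comp_desc hiφ hφq hkl hqm hn)
    (AmalgamatedSum.desc_surjective (Z := LinearMap.ker l) hφq hl hqm hn)

theorem isUniversalDescent_algebraMap_of_isHausdorff (hS : IsSMulRegular S a) :
    IsUniversalDescent (algebraMap A S) :=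
  isUniversalDescent_algebraMap_of_exact hS (Submodule.mkQ_surjective _)
    (LinearMap.exact_map_mkQ_range (Algebra.linearMap A S))

end AdicallyComplete

section Separation

open TensorProduct

variable {A : Type u} [CommRing A] {a : A}

lemma isSMulRegular_hausdorffification {M : Type*} [AddCommGroup M] [Module A M]
    (ha : IsSMulRegular M a) : IsSMulRegular (Hausdorffification (Ideal.span {a}) M) a := by
  refine IsSMulRegular.of_right_eq_zero_of_smul fun x hx ↦ ?_
  obtain ⟨y, rfl⟩ := Submodule.mkQ_surjective _ x
  rw [← map_smul, Submodule.mkQ_apply, Submodule.Quotient.mk_eq_zero, Submodule.mem_iInf] at hx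
  refine (Submodule.Quotient.mk_eq_zero _).2 ((Submodule.mem_iInf _).2 fun n ↦ ?_)
  obtain ⟨z, hz⟩ : ∃ z, a ^ (n + 1) • z = a • y := by
    rw [← mem_span_singleton_smul_top_iff, ← Ideal.span_singleton_pow]
    exact hx (n + 1)
  rw [pow_succ', mul_smul] at hz
  rw [Ideal.span_singleton_pow]
  exact mem_span_singleton_smul_top_iff.2 ⟨z, ha hz⟩

variable {S : Type u} [CommRing S] [Algebra A S]

lemma baseChange_mk_bijective {J : Ideal S} (hJ : ∀ x ∈ J, ∃ y, a • y = x) :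
    Function.Bijective (Algebra.TensorProduct.map (.id (A ⧸ Ideal.span {a}) (A ⧸ Ideal.span {a}))
      (Ideal.Quotient.mkₐ A J)) := by
  constructor
  · refine (injective_iff_map_eq_zero _).2 fun x hx ↦ ?_
    obtain ⟨s, rfl⟩ := exists_one_tmul_eq x
    obtain ⟨y, hy⟩ := one_tmul_eq_zero_iff.1 hx
    obtain ⟨t, rfl⟩ := Ideal.Quotient.mk_surjective y
    obtain ⟨u, hu⟩ := hJ (s - a • t) (Ideal.Quotient.eq.1 hy.symm)
    exact one_tmul_eq_zero_iff.2 ⟨t + u, by rw [smul_add, hu, add_sub_cancel]⟩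
  · intro x
    obtain ⟨y, rfl⟩ := exists_one_tmul_eq x
    obtain ⟨s, rfl⟩ := Ideal.Quotient.mk_surjective y
    exact ⟨1 ⊗ₜ s, rfl⟩

theorem isUniversalDescent_algebraMap_of_isAdicComplete [IsAdicComplete (Ideal.span {a}) A]
    [Module.FaithfullyFlat (A ⧸ Ideal.span {a}) ((A ⧸ Ideal.span {a}) ⊗[A] S)]
    [Algebra.FinitePresentation (A ⧸ Ideal.span {a}) ((A ⧸ Ideal.span {a}) ⊗[A] S)]
    (hS : IsSMulRegular S a) : IsUniversalDescent (algebraMap A S) := by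
  let b := algebraMap A S a
  let J : Ideal S := ⨅ n : ℕ, Ideal.span {b} ^ n • ⊤
  have hJ (x : S) (hx : x ∈ J) : ∃ y, a • y = x := by
    have := (Submodule.mem_iInf _).1 hx 1
    rw [pow_one, mem_span_singleton_smul_top_iff] at this
    simpa only [b, algebraMap_smul] using this
  let e := AlgEquiv.ofBijective _ (baseChange_mk_bijective hJ)
  have := Module.FaithfullyFlat.of_linearEquiv _ _ e.symm.toLinearEquiv
  have := Algebra.FinitePresentation.equiv e
  have : IsHausdorff (Ideal.span {b}) (S ⧸ J) :=
    inferInstanceAs (IsHausdorff _ (Hausdorffification (Ideal.span {b}) S))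
  have : IsHausdorff (Ideal.span {a}) (S ⧸ J) := .of_map (J := Ideal.span {b}) <| by
    rw [Ideal.map_span, Set.image_singleton]
  have regular_b : IsSMulRegular S b := by rwa [isSMulRegular_algebraMap_iff]
  have regular_quotient : IsSMulRegular (S ⧸ J) a :=
    (isSMulRegular_algebraMap_iff S).1 (isSMulRegular_hausdorffification regular_b)
  exact .of_comp _ (Ideal.Quotient.mk J)
    (isUniversalDescent_algebraMap_of_isHausdorff regular_quotient)

end Separation

/-- The map `A/(a) → S/(b)` induced by a ring homomorphism that sends `a` to `b`. -/
def quotientSpanSingletonMap {A S : Type*} [CommRing A] [CommRing S] (f : A →+* S) {a : A} {b : S}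
    (hab : f a = b) : A ⧸ Ideal.span {a} →+* S ⧸ Ideal.span {b} :=
  Ideal.quotientMap _ f <| by
    rw [Ideal.span_singleton_le_iff_mem, Ideal.mem_comap, hab]
    exact Ideal.mem_span_singleton_self b

lemma exists_algEquiv_quotient_tensorProduct {A S : Type*} [CommRing A] [CommRing S] [Algebra A S]
    {a : A} {b : S} (hab : algebraMap A S a = b) :
    let := (quotientSpanSingletonMap (algebraMap A S) hab).toAlgebra
    Nonempty ((S ⧸ Ideal.span {b}) ≃ₐ[A ⧸ Ideal.span {a}]
      TensorProduct A (A ⧸ Ideal.span {a}) S) := by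
  intro
  have map_span : Ideal.span {b} = (Ideal.span {a}).map (algebraMap A S) := by
    rw [Ideal.map_span, Set.image_singleton, hab]
  let e := Algebra.TensorProduct.quotIdealMapEquivQuotTensor S (Ideal.span {a})
  refine ⟨.ofRingEquiv (f := (Ideal.quotEquivOfEq map_span).trans e.toRingEquiv) fun x ↦ ?_⟩
  obtain ⟨x, rfl⟩ := Ideal.Quotient.mk_surjective x
  exact e.commutes (Ideal.Quotient.mk _ x)

theorem stmt18_general {A B : Type u} [CommRing A] [CommRing B] (f : A →+* B) {a : A} {b : B}
    (hab : f a = b) (hB : ∀ x, b * x = 0 → x = 0)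
    [IsAdicComplete (Ideal.span {a}) A] (hff : (quotientSpanSingletonMap f hab).FaithfullyFlat)
    (hfp : (quotientSpanSingletonMap f hab).FinitePresentation) : IsUniversalDescent f := by
  let := f.toAlgebra
  let := (quotientSpanSingletonMap f hab).toAlgebra
  obtain ⟨e⟩ := exists_algEquiv_quotient_tensorProduct (S := B) hab
  have : Module.FaithfullyFlat (A ⧸ Ideal.span {a}) (B ⧸ Ideal.span {b}) := hff
  have := Module.FaithfullyFlat.of_linearEquiv _ _ e.symm.toLinearEquiv
  have : Algebra.FinitePresentation (A ⧸ Ideal.span {a}) (B ⧸ Ideal.span {b}) := hfp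
  have := Algebra.FinitePresentation.equiv e
  refine isUniversalDescent_algebraMap_of_isAdicComplete (a := a)
    (IsSMulRegular.of_right_eq_zero_of_smul fun x hx ↦ hB x ?_)
  rwa [← hab, ← RingHom.algebraMap_toAlgebra f, ← Algebra.smul_def]

/-- Lemma 6.13(2): let `K` be a complete nonarchimedean field with ring of integers `O_K` and
`π ∈ O_K` a nonzero nonunit. Let `R → S` be a map of `π`-torsion-free `O_K`-algebras with `R`
`π`-adically complete. If `R/πR → S/πS` is faithfully flat and finitely presented, then
`R → S` is a universal descent morphism. -/
theorem stmt18 (hπ0 : π ≠ 0) (hπu : ¬IsUnit π)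
    (f : R →ₐ[ringOfIntegers K] S)
    (hRtf : ∀ x : R, algebraMap (ringOfIntegers K) R π * x = 0 → x = 0)
    (hStf : ∀ x : S, algebraMap (ringOfIntegers K) S π * x = 0 → x = 0)
    (hRc : IsAdicComplete (Ideal.span {algebraMap (ringOfIntegers K) R π}) R)
    (hff : letI := (modPiMap π f).toAlgebra
      Module.FaithfullyFlat (R ⧸ Ideal.span {algebraMap (ringOfIntegers K) R π})
        (S ⧸ Ideal.span {algebraMap (ringOfIntegers K) S π}))
    (hfp : (modPiMap π f).FinitePresentation) :
    IsUniversalDescent f.toRingHom :=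
  stmt18_general f.toRingHom (f.commutes π) hStf hff hfp
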